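/- Let C, N, p ≥ 1 be integers, γ > 0, and ε0 > 0. Let w_1,…,w_C ∈ ℝ^p be nonzero, and let η : ℕ → ℝ satisfy η(t) ≥ ε0 for all t and lim_{t→∞} η(t+1)/η(t) = 1. For each i ∈ [N], c ∈ [C], let h_{i,c} : ℕ → ℝ^p satisfy h_{i,c}(0) ≠ 0, ⟨w_c, h_{i,c}(0)⟩/(‖w_c‖₂·‖h_{i,c}(0)‖₂) > −1, and h_{i,c}(t+1) = h_{i,c}(t) + ((1+γ)·η(t)/(C·N·‖h_{i,c}(t)‖₂))·( w_c − (⟨h_{i,c}(t), w_c⟩/‖h_{i,c}(t)‖₂²)·h_{i,c}(t) ) for every t. Assume that for each (i,c) the sequence t ↦ η(t)/‖h_{i,c}(t)‖₂ is non-increasing and (1+γ)·η(0)·‖w_c‖₂/(C·N) ≤ ‖h_{i,c}(0)‖₂². If in addition there exists L such that ‖h_{i,c}(t)‖₂ ≤ L for all t, i, c, then there exist μ > 0 and K ≥ 0 such that for all t ∈ ℕ: √( Σ_{i∈[N]} Σ_{c∈[C]} ‖ h_{i,c}(t)/‖h_{i,c}(t)‖₂ − w_c/‖w_c‖₂ ‖₂²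 ) ≤ K·e^{−μ·t}. -/

import Mathlib

open scoped BigOperators
open RealInnerProductSpace Filter

/-!
Each feature evolves independently. Write `s` for the cosine of the angle between `h` and `w`, and
`b = a ‖w‖ / ‖h‖` for the relative size of a step `h' = h + a (w - proj_h w)`. The step is
orthogonal to `h`, so `‖h'‖² = ‖h‖² (1 + b² (1 - s²))`, which gives
`s' = (s + b (1 - s²)) / √(1 + b² (1 - s²))`. Bounding the root by `1 + b² (1 - s²) / 2` yields, for
`0 ≤ b ≤ 1`, the one-step contraction `1 - s' ≤ (1 - s) (1 - b (1 + s) / 2)` (`cos_step`).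

Along a trajectory the norms do not decrease and `η / ‖h‖` does not increase, so `b` never exceeds
its initial value, which is at most `1`; the bound `‖h‖ ≤ L` and `η ≥ ε0` keep `b` above a positive
constant. The cosine does not decrease, so `1 + s` stays above its positive initial value.
Hence `1 - s` decays geometrically (`trajectory_decay`), and the squared distance between the
normalized vectors is `2 (1 - s)`. The finitely many pairs `(i, c)` share the smallest rate.
-/

/-- The cosine of the angle between `w` and `h`. -/
noncomputable def cosAngle {E : Type*} [NormedAddCommGroup E] [InnerProductSpace ℝ E]
    (w h : E) : ℝ := ⟪w, h⟫ / (‖w‖ * ‖h‖)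

lemma cosAngle_le_one {E : Type*} [NormedAddCommGroup E] [InnerProductSpace ℝ E] (w h : E) :
    cosAngle w h ≤ 1 :=
  (abs_le.1 (abs_real_inner_div_norm_mul_norm_le_one w h)).2

lemma neg_one_le_cosAngle {E : Type*} [NormedAddCommGroup E] [InnerProductSpace ℝ E] (w h : E) :
    -1 ≤ cosAngle w h :=
  (abs_le.1 (abs_real_inner_div_norm_mul_norm_le_one w h)).1

lemma norm_sub_normalized_sq {E : Type*} [NormedAddCommGroup E] [InnerProductSpace ℝ E]
    {w h : E} (hw : w ≠ 0) (hh : h ≠ 0) :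
    ‖(‖h‖⁻¹ • h) - (‖w‖⁻¹ • w)‖ ^ 2 = 2 * (1 - cosAngle w h) := by
  have hn : ‖h‖ ≠ 0 := norm_ne_zero_iff.2 hh
  have hW : ‖w‖ ≠ 0 := norm_ne_zero_iff.2 hw
  rw [norm_sub_sq_real, norm_smul, norm_smul, norm_inv, norm_inv, norm_norm, norm_norm,
    real_inner_smul_left, real_inner_smul_right, real_inner_comm, cosAngle]
  field_simp
  ring

/-- One step along the component of `w` orthogonal to `h`, of relative size
`a * ‖w‖ / ‖h‖ ≤ 1`, does not decrease the norm and contracts the defect `1 - cos`. -/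
lemma cos_step {E : Type*} [NormedAddCommGroup E] [InnerProductSpace ℝ E]
    {w h h' : E} (hw : w ≠ 0) (hh : h ≠ 0) {a : ℝ} (ha : 0 ≤ a)
    (hb : a * ‖w‖ / ‖h‖ ≤ 1)
    (hstep : h' = h + a • (w - (⟪h, w⟫ / ‖h‖ ^ 2) • h)) :
    ‖h‖ ≤ ‖h'‖ ∧ 1 - cosAngle w h' ≤
      (1 - cosAngle w h) * (1 - a * ‖w‖ / ‖h‖ * (1 + cosAngle w h) / 2) := by
  have hn : 0 < ‖h‖ := norm_pos_iff.2 hh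
  have hW : 0 < ‖w‖ := norm_pos_iff.2 hw
  have hs1 := cosAngle_le_one w h
  have hs2 := neg_one_le_cosAngle w h
  have hP : ⟪h, w⟫ = ‖h‖ * ‖w‖ * cosAngle w h := by
    rw [cosAngle, real_inner_comm]; field_simp
  have hb0 : 0 ≤ a * ‖w‖ / ‖h‖ := by positivity
  have haW : a * ‖w‖ = a * ‖w‖ / ‖h‖ * ‖h‖ := by field_simp
  have hcos' : cosAngle w h' = ⟪w, h'⟫ / (‖w‖ * ‖h'‖) := rfl
  generalize cosAngle w h = s at *
  generalize a * ‖w‖ / ‖h‖ = b at *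
  have hinner : ⟪w, h'⟫ = ‖h‖ * ‖w‖ * (s + b * (1 - s ^ 2)) := by
    rw [hstep, inner_add_right, real_inner_smul_right, inner_sub_right, real_inner_smul_right,
      real_inner_self_eq_norm_sq, real_inner_comm, hP]
    field_simp
    linear_combination (1 - s ^ 2) * haW
  have horth : ⟪h, w - (⟪h, w⟫ / ‖h‖ ^ 2) • h⟫ = 0 := by
    rw [inner_sub_right, real_inner_smul_right, real_inner_self_eq_norm_sq]
    field_simp
    ring
  have hv : ‖w - (⟪h, w⟫ / ‖h‖ ^ 2) • h‖ ^ 2 = ‖w‖ ^ 2 * (1 - s ^ 2) := by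
    rw [norm_sub_sq_real, norm_smul, real_inner_smul_right, real_inner_comm h w, hP, mul_pow,
      Real.norm_eq_abs, sq_abs]
    field_simp
    ring
  have hsq : ‖h'‖ ^ 2 = ‖h‖ ^ 2 * (1 + b ^ 2 * (1 - s ^ 2)) := by
    rw [hstep, norm_add_sq_real, real_inner_smul_right, horth, norm_smul, mul_pow, hv,
      Real.norm_eq_abs, sq_abs]
    linear_combination (1 - s ^ 2) * (a * ‖w‖ + b * ‖h‖) * haW
  have hq : 0 ≤ 1 - s ^ 2 := by nlinarith
  have hbq : 0 ≤ b ^ 2 * (1 - s ^ 2) := by positivity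
  have hle : ‖h‖ ≤ ‖h'‖ := by
    refine (sq_le_sq₀ (by positivity) (by positivity)).1 ?_
    nlinarith [mul_nonneg (sq_nonneg ‖h‖) hbq]
  have hupper : ‖h'‖ ≤ ‖h‖ * (1 + b ^ 2 * (1 - s ^ 2) / 2) := by
    refine (sq_le_sq₀ (by positivity) (by positivity)).1 ?_
    rw [hsq, mul_pow]
    gcongr
    nlinarith [sq_nonneg (b ^ 2 * (1 - s ^ 2))]
  have hm : 0 < ‖h'‖ := hn.trans_le hle
  refine ⟨hle, ?_⟩
  have hR : 0 ≤ (1 - s) * (1 - b * (1 + s) / 2) :=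
    mul_nonneg (by linarith) (by nlinarith)
  have hnum : 1 - cosAngle w h' = (‖h'‖ - ‖h‖ * (s + b * (1 - s ^ 2))) / ‖h'‖ := by
    rw [hcos', hinner]; field_simp
  rw [hnum, div_le_iff₀ hm]
  have h1 : ‖h'‖ - ‖h‖ * (s + b * (1 - s ^ 2)) ≤ ‖h‖ * ((1 - s) * (1 - b * (1 + s) / 2)) := by
    have h2 : 0 ≤ ‖h‖ * ((1 - s ^ 2) * (b * (1 - b))) :=
      mul_nonneg hn.le (mul_nonneg hq (mul_nonneg hb0 (by linarith)))
    nlinarith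
  calc _ ≤ _ := h1
    _ ≤ ‖h'‖ * ((1 - s) * (1 - b * (1 + s) / 2)) := by gcongr
    _ = _ := mul_comm _ _

/-- Geometric decay for a single feature; `k` plays the role of `(1 + γ) / (C N)`. -/
lemma trajectory_decay {E : Type*} [NormedAddCommGroup E] [InnerProductSpace ℝ E]
    {w : E} (hw : w ≠ 0) {k ε0 L : ℝ} (hk : 0 < k) (hε0 : 0 < ε0)
    {η : ℕ → ℝ} (hη : ∀ t, ε0 ≤ η t) {h : ℕ → E} (h0 : h 0 ≠ 0)
    (hcos : -1 < cosAngle w (h 0))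
    (hrec : ∀ t, h (t + 1) = h t +
      (k * (η t / ‖h t‖)) • (w - (⟪h t, w⟫ / ‖h t‖ ^ 2) • h t))
    (hmono : Antitone fun t => η t / ‖h t‖)
    (hinit : k * η 0 * ‖w‖ ≤ ‖h 0‖ ^ 2) (hL : ∀ t, ‖h t‖ ≤ L) :
    ∃ μ : ℝ, 0 < μ ∧ ∀ t : ℕ,
      ‖(‖h t‖⁻¹ • h t) - (‖w‖⁻¹ • w)‖ ^ 2 ≤ 4 * Real.exp (-(2 * μ * t)) := by
  have hn0 : 0 < ‖h 0‖ := norm_pos_iff.2 h0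
  have hW : 0 < ‖w‖ := norm_pos_iff.2 hw
  have hLpos : 0 < L := hn0.trans_le (hL 0)
  have hηpos : ∀ t, 0 < η t := fun t => hε0.trans_le (hη t)
  -- The lower bound on the relative step size `k * (η t / ‖h t‖) * ‖w‖ / ‖h t‖`.
  obtain ⟨β, hβ⟩ : ∃ β, β = k * (ε0 / L) * ‖w‖ / L := ⟨_, rfl⟩
  have hβpos : 0 < β := by rw [hβ]; positivity
  have hb_le : ∀ t, ‖h 0‖ ≤ ‖h t‖ → k * (η t / ‖h t‖) * ‖w‖ / ‖h t‖ ≤ 1 := by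
    intro t ht
    have hq : η t / ‖h t‖ ≤ η 0 / ‖h 0‖ := hmono (Nat.zero_le t)
    have := hηpos 0
    calc k * (η t / ‖h t‖) * ‖w‖ / ‖h t‖ ≤ k * (η 0 / ‖h 0‖) * ‖w‖ / ‖h 0‖ := by gcongr
      _ = k * η 0 * ‖w‖ / ‖h 0‖ ^ 2 := by field_simp
      _ ≤ 1 := (div_le_one (by positivity)).2 hinit
  have hb_ge : ∀ t, ‖h 0‖ ≤ ‖h t‖ → β ≤ k * (η t / ‖h t‖) * ‖w‖ / ‖h t‖ := by
    intro t ht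
    have hnt : 0 < ‖h t‖ := hn0.trans_le ht
    have h1 := hη t
    have h2 := hL t
    have h3 := hηpos t
    rw [hβ]
    gcongr
  have hs0 : 0 < 1 + cosAngle w (h 0) := by linarith
  obtain ⟨μ, hμ⟩ : ∃ μ, μ = β * (1 + cosAngle w (h 0)) / 4 := ⟨_, rfl⟩
  have key : ∀ t : ℕ, ‖h 0‖ ≤ ‖h t‖ ∧ cosAngle w (h 0) ≤ cosAngle w (h t) ∧
      1 - cosAngle w (h t) ≤ 2 * Real.exp (-(2 * μ * t)) := by
    intro t
    induction t with
    | zero => exact ⟨le_rfl, le_rfl, by simp; linarith⟩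
    | succ t ih =>
      obtain ⟨ihn, ihs, ihe⟩ := ih
      have hht : h t ≠ 0 := norm_pos_iff.1 (hn0.trans_le ihn)
      have ha : 0 ≤ k * (η t / ‖h t‖) := by have := hηpos t; positivity
      obtain ⟨hn', hs'⟩ := cos_step hw hht ha (hb_le t ihn) (hrec t)
      have hbg := hb_ge t ihn
      have hle1 := cosAngle_le_one w (h t)
      have hfac : 1 - k * (η t / ‖h t‖) * ‖w‖ / ‖h t‖ * (1 + cosAngle w (h t)) / 2
          ≤ 1 - 2 * μ := by
        have : β * (1 + cosAngle w (h 0)) ≤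
            k * (η t / ‖h t‖) * ‖w‖ / ‖h t‖ * (1 + cosAngle w (h t)) := by gcongr
        rw [hμ]; linarith
      have hμ0 : 0 ≤ 2 * μ := by rw [hμ]; positivity
      have hstep : 1 - cosAngle w (h (t + 1)) ≤ (1 - cosAngle w (h t)) * (1 - 2 * μ) :=
        hs'.trans (mul_le_mul_of_nonneg_left hfac (by linarith))
      refine ⟨ihn.trans hn', by nlinarith, hstep.trans ?_⟩
      have hexp : 1 - 2 * μ ≤ Real.exp (-(2 * μ)) := Real.one_sub_le_exp_neg _
      calc (1 - cosAngle w (h t)) * (1 - 2 * μ)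
          ≤ (1 - cosAngle w (h t)) * Real.exp (-(2 * μ)) :=
            mul_le_mul_of_nonneg_left hexp (by linarith)
        _ ≤ 2 * Real.exp (-(2 * μ * t)) * Real.exp (-(2 * μ)) := by gcongr
        _ = 2 * Real.exp (-(2 * μ * (t + 1 : ℕ))) := by
            rw [mul_assoc, ← Real.exp_add]; push_cast; ring_nf
  refine ⟨μ, by rw [hμ]; positivity, fun t => ?_⟩
  obtain ⟨hn, -, he⟩ := key t
  rw [norm_sub_normalized_sq hw (norm_pos_iff.1 (hn0.trans_le hn))]
  linarith

/-- **Exponential convergence in the spherical constrained case under bounded features.**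
If in addition the feature norms stay bounded by `L`, the Frobenius distance between
the matrix of normalized features and the matrix of normalized prototypes decreases
at an exponential rate `K·e^{−μ·t}`. -/
theorem spherical_constrained_exponential_convergence
    (C N p : ℕ) (hC : 1 ≤ C) (hN : 1 ≤ N) (hp : 1 ≤ p)
    (γ : ℝ) (hγ : 0 < γ)
    (ε0 : ℝ) (hε0 : 0 < ε0)
    (w : Fin C → EuclideanSpace ℝ (Fin p)) (hw : ∀ c, w c ≠ 0)
    (η : ℕ → ℝ) (hη : ∀ t, ε0 ≤ η t)
    (hηratio : Tendsto (fun t => η (t + 1) / η t) atTop (nhds 1))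
    (h : Fin N → Fin C → ℕ → EuclideanSpace ℝ (Fin p))
    (h0 : ∀ i c, h i c 0 ≠ 0)
    (hcos : ∀ i c, ⟪w c, h i c 0⟫ / (‖w c‖ * ‖h i c 0‖) > -1)
    (hrec : ∀ (i : Fin N) (c : Fin C) (t : ℕ),
      h i c (t + 1) = h i c t +
        ((1 + γ) * η t / ((C : ℝ) * N * ‖h i c t‖)) •
          (w c - (⟪h i c t, w c⟫ / ‖h i c t‖ ^ 2) • h i c t))
    (hmono : ∀ i c, Antitone fun t => η t / ‖h i c t‖)
    (hinit : ∀ i c, (1 + γ) * η 0 * ‖w c‖ / ((C : ℝ) * N) ≤ ‖h i c 0‖ ^ 2)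
    (L : ℝ) (hL : ∀ (t : ℕ) (i : Fin N) (c : Fin C), ‖h i c t‖ ≤ L) :
    ∃ μ K : ℝ, 0 < μ ∧ 0 ≤ K ∧ ∀ t : ℕ,
      Real.sqrt (∑ i : Fin N, ∑ c : Fin C,
          ‖(‖h i c t‖⁻¹ • h i c t) - (‖w c‖⁻¹ • w c)‖ ^ 2) ≤
        K * Real.exp (-(μ * t)) := by
  have hCpos : (0 : ℝ) < C := by exact_mod_cast hC
  have hNpos : (0 : ℝ) < N := by exact_mod_cast hN
  have hdecay : ∀ i c, ∃ μ : ℝ, 0 < μ ∧ ∀ t : ℕ,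
      ‖(‖h i c t‖⁻¹ • h i c t) - (‖w c‖⁻¹ • w c)‖ ^ 2 ≤ 4 * Real.exp (-(2 * μ * t)) := by
    intro i c
    refine trajectory_decay (k := (1 + γ) / (C * N)) (hw c) (by positivity) hε0 hη (h0 i c)
      (hcos i c) (fun t => ?_) (hmono i c) ?_ (fun t => hL t i c)
    · rw [div_mul_div_comm]
      exact hrec i c t
    · refine le_of_eq_of_le ?_ (hinit i c)
      ring
  choose m hmpos hm using hdecay
  -- The common rate is the smallest of the finitely many individual rates.
  have : Nonempty (Fin N × Fin C) := ⟨(⟨0, hN⟩, ⟨0, hC⟩)⟩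
  obtain ⟨q, hq⟩ := Finite.exists_min fun q : Fin N × Fin C => m q.1 q.2
  refine ⟨m q.1 q.2, Real.sqrt (4 * N * C), hmpos _ _, Real.sqrt_nonneg _, fun t => ?_⟩
  have hsum : ∑ i : Fin N, ∑ c : Fin C, ‖(‖h i c t‖⁻¹ • h i c t) - (‖w c‖⁻¹ • w c)‖ ^ 2
      ≤ ∑ _i : Fin N, ∑ _c : Fin C, 4 * Real.exp (-(2 * m q.1 q.2 * t)) := by
    gcongr with i _ c _
    refine (hm i c t).trans ?_
    have := hq (i, c)
    gcongr
  have hexp : Real.exp (-(2 * m q.1 q.2 * t)) = Real.exp (-(m q.1 q.2 * t)) ^ 2 := by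
    rw [← Real.exp_nat_mul]; push_cast; ring_nf
  refine (Real.sqrt_le_sqrt hsum).trans (le_of_eq ?_)
  rw [← Real.sqrt_sq (Real.exp_pos (-(m q.1 q.2 * t))).le, ← Real.sqrt_mul (by positivity), hexp]
  congr 1
  simp only [Finset.sum_const, Finset.card_univ, Fintype.card_fin, nsmul_eq_mul]
  ring
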